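/- arXiv:2111.06297 — 2 statements merged into one kernel-verified Lean document; each statement's English description precedes it below -/
import Mathlib

section
/- Let -∞ < s₀ < s₁ < ∞, θ ∈ (0,1), s = (1-θ)s₀+θs₁, and p, q ∈ (0,∞) with p ≥ q. Then for all sequences ξ = (ξ_j)_{j∈ℤ}: c (1/θ^{1/p} + 1/(1-θ)^{1/p}) ‖ξ‖_{ℓ_p^s(ℤ)} ≤ ‖ξ‖_{(ℓ_q^{s₀}(ℤ), ℓ_q^{s₁}(ℤ))_{θ,p}} ≤ C (1/θ^{1/q} + 1/(1-θ)^{1/q}) ‖ξ‖_{ℓ_p^s(ℤ)}, where c, C > 0 are independent of θ. -/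
open scoped ENNReal

/-- The K-functional of a compatible pair of (quasi-)seminormed spaces. -/
noncomputable def KfunE {V : Type*} [AddCommGroup V] (N0 N1 : V → ℝ≥0∞) (t : ℝ) (f : V) : ℝ≥0∞ :=
  ⨅ (f0 : V) (f1 : V) (_ : f = f0 + f1), N0 f0 + ENNReal.ofReal t * N1 f1

/-- The real interpolation (quasi-)norm. -/
noncomputable def interpNormE {V : Type*} [AddCommGroup V] (N0 N1 : V → ℝ≥0∞) (θ p : ℝ)
    (f : V) : ℝ≥0∞ :=
  (∫⁻ t in Set.Ioi (0 : ℝ),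
      (ENNReal.ofReal (t ^ (-θ)) * KfunE N0 N1 t f) ^ p / ENNReal.ofReal t) ^ (1 / p)

/-- The weighted sequence space norm `‖ξ‖_{ℓ_q^s(ℤ)} = (Σ_j (2^{js}|ξ_j|)^q)^{1/q}`. -/
noncomputable def lqsNorm (s q : ℝ) (ξ : ℤ → ℝ) : ℝ≥0∞ :=
  (∑' j : ℤ, (ENNReal.ofReal ((2 : ℝ) ^ ((j : ℝ) * s) * |ξ j|)) ^ q) ^ (1 / q)


open MeasureTheory

lemma aux_tsum_rpow_le (x : ℤ → ℝ≥0∞) {r : ℝ} (hr : 1 ≤ r) :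
    ∑' j, x j ^ r ≤ (∑' j, x j) ^ r := by
  have h1 : ∀ y : ℝ≥0∞, y ^ r = y * y ^ (r - 1) := by
    intro y
    conv_lhs => rw [show r = 1 + (r - 1) by ring,
      ENNReal.rpow_add_of_nonneg _ _ zero_le_one (by linarith), ENNReal.rpow_one]
  rw [h1 (∑' j, x j), ← ENNReal.tsum_mul_right]
  refine ENNReal.tsum_le_tsum fun j => ?_
  rw [h1]
  gcongr
  all_goals exact ENNReal.le_tsum j

lemma aux_lq_lp (a : ℤ → ℝ≥0∞) {q p : ℝ} (hq : 0 < q) (hqp : q ≤ p) :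
    ∑' j, a j ^ p ≤ ((∑' j, a j ^ q) ^ (1 / q)) ^ p := by
  have h := aux_tsum_rpow_le (fun j => a j ^ q) (r := p / q) ((one_le_div hq).2 hqp)
  have e : q * (p / q) = p := by field_simp
  have e2 : 1 / q * p = p / q := by field_simp
  simpa only [← ENNReal.rpow_mul, e, e2] using h

lemma aux_weight (w f : ℤ → ℝ≥0∞) {r : ℝ} (hr : 1 ≤ r) :
    (∑' j, w j * f j) ^ r ≤ (∑' j, w j) ^ (r - 1) * ∑' j, w j * f j ^ r := by
  have hr0 : 0 < r := by linarith
  have key : ∑' j, w j * f j ≤ (∑' j, w j) ^ (1 - r⁻¹) * (∑' j, w j * f j ^ r) ^ r⁻¹ := by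
    rw [ENNReal.tsum_eq_iSup_sum]
    refine iSup_le fun s => ?_
    refine (ENNReal.inner_le_weight_mul_Lp_of_nonneg s hr w f).trans ?_
    have : 0 ≤ 1 - r⁻¹ := sub_nonneg.2 (inv_le_one_of_one_le₀ hr)
    gcongr
    · exact ENNReal.sum_le_tsum s
    · exact ENNReal.sum_le_tsum s
  calc _ ≤ ((∑' j, w j) ^ (1 - r⁻¹) * (∑' j, w j * f j ^ r) ^ r⁻¹) ^ r := by gcongr
    _ = _ := by
      rw [ENNReal.mul_rpow_of_nonneg _ _ hr0.le, ← ENNReal.rpow_mul, ← ENNReal.rpow_mul,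
        inv_mul_cancel₀ hr0.ne', ENNReal.rpow_one, sub_mul, inv_mul_cancel₀ hr0.ne', one_mul]

/-- The one-variable integral. -/
lemma aux_integral (A B θ r : ℝ) (hA : 0 < A) (hB : 0 < B) (h0 : 0 < θ) (h1 : θ < 1)
    (hr : 0 < r) :
    ∫⁻ t in Set.Ioi (0 : ℝ), ENNReal.ofReal (t ^ (-θ) * min A (B * t)) ^ r / ENNReal.ofReal t
      = ENNReal.ofReal ((A ^ (1 - θ) * B ^ θ) ^ r * (1 / r * (1 / θ + 1 / (1 - θ)))) := by
  have hAB : 0 < A / B := div_pos hA hB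
  have h1' : 0 < 1 - θ := by linarith
  rw [← Set.Ioc_union_Ioi_eq_Ioi hAB.le, lintegral_union measurableSet_Ioi
    (Set.Ioc_disjoint_Ioi le_rfl)]
  have e1 : ∫⁻ t in Set.Ioc (0 : ℝ) (A / B),
      ENNReal.ofReal (t ^ (-θ) * min A (B * t)) ^ r / ENNReal.ofReal t
      = ENNReal.ofReal ((A ^ (1 - θ) * B ^ θ) ^ r * (1 / r * (1 / (1 - θ)))) := by
    have hi : IntegrableOn (fun t : ℝ => B ^ r * t ^ ((1 - θ) * r - 1)) (Set.Ioc 0 (A / B)) := by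
      have := (intervalIntegral.intervalIntegrable_rpow' (a := 0) (b := A / B)
        (r := (1 - θ) * r - 1) (by nlinarith [mul_pos h1' hr])).const_mul (B ^ r)
      exact (intervalIntegrable_iff_integrableOn_Ioc_of_le hAB.le).1 this
    rw [setLIntegral_congr_fun (g := fun t => ENNReal.ofReal (B ^ r * t ^ ((1 - θ) * r - 1)))
      measurableSet_Ioc]
    · rw [← ofReal_integral_eq_lintegral_ofReal hi]
      · rw [← intervalIntegral.integral_of_le hAB.le, intervalIntegral.integral_const_mul,
          integral_rpow (Or.inl (by nlinarith [mul_pos h1' hr]))]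
        congr 1
        have hm := mul_pos h1' hr
        rw [sub_add_cancel, Real.zero_rpow hm.ne', sub_zero, Real.div_rpow hA.le hB.le,
          Real.mul_rpow (by positivity) (by positivity), ← Real.rpow_mul hA.le,
          ← Real.rpow_mul hB.le]
        have : B ^ r = B ^ ((1 - θ) * r) * B ^ (θ * r) := by
          rw [← Real.rpow_add hB]; ring_nf
        rw [this]
        have : B ^ ((1 - θ) * r) ≠ 0 := by positivity
        field_simp
      · filter_upwards [ae_restrict_mem measurableSet_Ioc] with t ht
        have := ht.1
        simp only [Pi.zero_apply]
        positivity
    · intro t ht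
      have ht0 : 0 < t := ht.1
      have hm : min A (B * t) = B * t := by
        apply min_eq_right
        have := (le_div_iff₀ hB).1 ht.2
        linarith
      simp only [hm]
      rw [ENNReal.ofReal_rpow_of_pos (by positivity), ← ENNReal.ofReal_div_of_pos ht0]
      congr 1
      rw [Real.mul_rpow (by positivity) (by positivity), Real.mul_rpow hB.le ht0.le,
        ← Real.rpow_mul ht0.le, Real.rpow_sub_one ht0.ne',
        show (1 - θ) * r = -θ * r + r by ring, Real.rpow_add ht0]
      ring
  have e2 : ∫⁻ t in Set.Ioi (A / B),
      ENNReal.ofReal (t ^ (-θ) * min A (B * t)) ^ r / ENNReal.ofReal t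
      = ENNReal.ofReal ((A ^ (1 - θ) * B ^ θ) ^ r * (1 / r * (1 / θ))) := by
    have hm := mul_pos h0 hr
    have hi : IntegrableOn (fun t : ℝ => A ^ r * t ^ (-θ * r - 1)) (Set.Ioi (A / B)) :=
      (integrableOn_Ioi_rpow_of_lt (by linarith) hAB).const_mul _
    rw [setLIntegral_congr_fun (g := fun t => ENNReal.ofReal (A ^ r * t ^ (-θ * r - 1)))
      measurableSet_Ioi]
    · rw [← ofReal_integral_eq_lintegral_ofReal hi]
      · rw [integral_const_mul, integral_Ioi_rpow_of_lt (by linarith) hAB]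
        congr 1
        rw [sub_add_cancel, Real.div_rpow hA.le hB.le,
          Real.mul_rpow (by positivity) (by positivity), ← Real.rpow_mul hA.le,
          ← Real.rpow_mul hB.le, show (1 - θ) * r = r + -θ * r by ring, Real.rpow_add hA,
          show -θ * r = -(θ * r) by ring, Real.rpow_neg hB.le]
        have : B ^ (θ * r) ≠ 0 := by positivity
        field_simp
      · filter_upwards [ae_restrict_mem measurableSet_Ioi] with t ht
        have : 0 < t := hAB.trans ht
        simp only [Pi.zero_apply]
        positivity
    · intro t ht
      have ht0 : 0 < t := hAB.trans ht
      have hm : min A (B * t) = A := by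
        apply min_eq_left
        have := (div_lt_iff₀ hB).1 ht
        linarith
      simp only [hm]
      rw [ENNReal.ofReal_rpow_of_pos (by positivity), ← ENNReal.ofReal_div_of_pos ht0]
      congr 1
      rw [Real.mul_rpow (by positivity) (by positivity), 
        ← Real.rpow_mul ht0.le, Real.rpow_sub_one ht0.ne']
      ring
  rw [e1, e2, ← ENNReal.ofReal_add (by positivity) (by positivity)]
  congr 1
  ring

lemma aux_K_upper (s0 s1 q t : ℝ) (hq : 0 < q) (ht : 0 < t) (ξ : ℤ → ℝ) :
    KfunE (lqsNorm s0 q) (lqsNorm s1 q) t ξ ≤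
      2 * (∑' j : ℤ, ENNReal.ofReal
        (min ((2 : ℝ) ^ ((j : ℝ) * s0)) ((2 : ℝ) ^ ((j : ℝ) * s1) * t) * |ξ j|) ^ q) ^ (1 / q) := by
  classical
  let P : ℤ → Prop := fun j => (2 : ℝ) ^ ((j : ℝ) * s0) ≤ (2 : ℝ) ^ ((j : ℝ) * s1) * t
  let f0 : ℤ → ℝ := fun j => if P j then ξ j else 0
  let f1 : ℤ → ℝ := fun j => if P j then 0 else ξ j
  have hf : ξ = f0 + f1 := by
    funext j
    by_cases h : P j <;> simp [f0, f1, h]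
  unfold KfunE
  refine le_trans (iInf_le_of_le f0 (iInf_le_of_le f1 (iInf_le_of_le hf
    (le_refl (lqsNorm s0 q f0 + ENNReal.ofReal t * lqsNorm s1 q f1))))) ?_
  rw [two_mul]
  refine add_le_add ?_ ?_
  · unfold lqsNorm
    refine ENNReal.rpow_le_rpow (ENNReal.tsum_le_tsum fun j => ?_) (by positivity)
    refine ENNReal.rpow_le_rpow (ENNReal.ofReal_le_ofReal ?_) hq.le
    by_cases h : P j
    · simp only [f0, h, if_true]
      rw [min_eq_left h]
    · simp only [f0, h, if_false, abs_zero, mul_zero]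
      positivity
  · unfold lqsNorm
    have e : ENNReal.ofReal t = (ENNReal.ofReal t ^ q) ^ (1 / q) := by
      rw [← ENNReal.rpow_mul, mul_one_div_cancel hq.ne', ENNReal.rpow_one]
    rw [e, ← ENNReal.mul_rpow_of_nonneg _ _ (by positivity), ← ENNReal.tsum_mul_left]
    refine ENNReal.rpow_le_rpow (ENNReal.tsum_le_tsum fun j => ?_) (by positivity)
    rw [← ENNReal.mul_rpow_of_nonneg _ _ hq.le, ← ENNReal.ofReal_mul ht.le]
    refine ENNReal.rpow_le_rpow (ENNReal.ofReal_le_ofReal ?_) hq.le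
    by_cases h : P j
    · simp only [f1, h, if_true, abs_zero, mul_zero]
      positivity
    · simp only [f1, h, if_false]
      rw [min_eq_right (not_le.1 h).le]
      apply le_of_eq; ring

lemma aux_K_lower (s0 s1 q p t : ℝ) (hq : 0 < q) (hqp : q ≤ p) (ht : 0 < t) (ξ : ℤ → ℝ) :
    (2 ^ (p + 1))⁻¹ * (∑' j : ℤ, ENNReal.ofReal
        (min ((2 : ℝ) ^ ((j : ℝ) * s0)) ((2 : ℝ) ^ ((j : ℝ) * s1) * t) * |ξ j|) ^ p)
    ≤ KfunE (lqsNorm s0 q) (lqsNorm s1 q) t ξ ^ p := by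
  have hp : 0 < p := by linarith
  suffices h : ((2 ^ (p + 1))⁻¹ * (∑' j : ℤ, ENNReal.ofReal
        (min ((2 : ℝ) ^ ((j : ℝ) * s0)) ((2 : ℝ) ^ ((j : ℝ) * s1) * t) * |ξ j|) ^ p)) ^ (1 / p)
      ≤ KfunE (lqsNorm s0 q) (lqsNorm s1 q) t ξ by
    have := ENNReal.rpow_le_rpow h hp.le
    rwa [← ENNReal.rpow_mul, one_div_mul_cancel hp.ne', ENNReal.rpow_one] at this
  refine le_iInf fun f0 => le_iInf fun f1 => le_iInf fun hf => ?_
  rw [one_div, ENNReal.rpow_inv_le_iff hp, ENNReal.inv_mul_le_iff (by simp)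
    (by simp; )]
  have hpt : ∀ j : ℤ, ENNReal.ofReal
        (min ((2 : ℝ) ^ ((j : ℝ) * s0)) ((2 : ℝ) ^ ((j : ℝ) * s1) * t) * |ξ j|) ^ p ≤
      2 ^ p * (ENNReal.ofReal ((2 : ℝ) ^ ((j : ℝ) * s0) * |f0 j|) ^ p
        + ENNReal.ofReal t ^ p * ENNReal.ofReal ((2 : ℝ) ^ ((j : ℝ) * s1) * |f1 j|) ^ p) := by
    intro j
    set A := (2 : ℝ) ^ ((j : ℝ) * s0) with hA
    set B := (2 : ℝ) ^ ((j : ℝ) * s1) with hB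
    have hA0 : 0 < A := by positivity
    have hB0 : 0 < B := by positivity
    rw [← ENNReal.mul_rpow_of_nonneg _ _ hp.le, ← ENNReal.ofReal_mul ht.le]
    have h1 : min A (B * t) * |ξ j| ≤ A * |f0 j| + t * (B * |f1 j|) := by
      have hx : |ξ j| ≤ |f0 j| + |f1 j| := by
        rw [hf]; exact abs_add_le _ _
      have hm : 0 ≤ min A (B * t) := by positivity
      calc _ ≤ min A (B * t) * (|f0 j| + |f1 j|) := by gcongr
        _ = min A (B * t) * |f0 j| + min A (B * t) * |f1 j| := by ring
        _ ≤ A * |f0 j| + (B * t) * |f1 j| := by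
          gcongr
          · exact min_le_left _ _
          · exact min_le_right _ _
        _ = _ := by ring
    refine (ENNReal.rpow_le_rpow (ENNReal.ofReal_le_ofReal h1) hp.le).trans ?_
    rw [ENNReal.ofReal_add (by positivity) (by positivity)]
    generalize ENNReal.ofReal (A * |f0 j|) = x
    generalize ENNReal.ofReal (t * (B * |f1 j|)) = y
    calc (x + y) ^ p ≤ (2 * max x y) ^ p := by
          rw [two_mul]; gcongr
          · exact le_max_left _ _
          · exact le_max_right _ _
      _ = 2 ^ p * max x y ^ p := ENNReal.mul_rpow_of_nonneg _ _ hp.le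
      _ ≤ _ := by
        gcongr
        rcases le_total x y with h | h
        · rw [max_eq_right h]; exact le_add_self
        · rw [max_eq_left h]; exact le_self_add
  refine (ENNReal.tsum_le_tsum hpt).trans ?_
  rw [ENNReal.tsum_mul_left, ENNReal.tsum_add, ENNReal.tsum_mul_left,
    ENNReal.rpow_add _ _ (by simp) (by simp), ENNReal.rpow_one, mul_assoc, two_mul]
  gcongr
  · refine (aux_lq_lp _ hq hqp).trans ?_
    gcongr
    exact le_self_add
  · refine (mul_le_mul_right (aux_lq_lp _ hq hqp) _).trans ?_
    rw [← ENNReal.mul_rpow_of_nonneg _ _ hp.le]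
    gcongr
    exact le_add_self

lemma aux_geom (y : ℝ) (hy : 0 < y) :
    ∑' n : ℕ, ENNReal.ofReal (Real.exp (-y * n)) ≤ ENNReal.ofReal (1 + 1 / y) := by
  have h1 : Real.exp (-y) < 1 := by rw [Real.exp_lt_one_iff]; linarith
  have h2 : ∀ n : ℕ, Real.exp (-y * n) = Real.exp (-y) ^ n := by
    intro n; rw [← Real.exp_nat_mul]; ring_nf
  simp_rw [h2]
  rw [← ENNReal.ofReal_tsum_of_nonneg (fun n => by positivity)
    (summable_geometric_of_lt_one (by positivity) h1),
    tsum_geometric_of_lt_one (by positivity) h1]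
  apply ENNReal.ofReal_le_ofReal
  have h3 : (1 + y) * Real.exp (-y) ≤ 1 := by
    have := Real.add_one_le_exp y
    calc _ ≤ Real.exp y * Real.exp (-y) := by gcongr; linarith
      _ = 1 := by rw [← Real.exp_add]; simp
  rw [inv_le_iff_one_le_mul₀ (by linarith)]
  have : (1 + 1 / y) * (1 - Real.exp (-y)) = (y + (1 - (1 + y) * Real.exp (-y))) / y := by
    field_simp; ring
  rw [this, le_div_iff₀ hy]
  linarith

lemma aux_sum (a b δ τ : ℝ) (ha : 0 < a) (hb : 0 < b) (hδ : 0 < δ) :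
    ∑' j : ℤ, ENNReal.ofReal (min (Real.exp (-a * (j * δ + τ))) (Real.exp (b * (j * δ + τ))))
      ≤ ENNReal.ofReal (1 + 1 / (a * δ)) + ENNReal.ofReal (1 + 1 / (b * δ)) := by
  set n : ℤ := ⌊τ / δ⌋ with hn
  have n1 : n * δ ≤ τ := (le_div_iff₀ hδ).1 (Int.floor_le (τ / δ))
  have n2 : τ < (n + 1) * δ := (div_lt_iff₀ hδ).1 (Int.lt_floor_add_one (τ / δ))
  rw [← (Equiv.subRight n).tsum_eq]
  rw [tsum_of_nat_of_neg_add_one ENNReal.summable ENNReal.summable]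
  refine add_le_add (le_trans ?_ (aux_geom _ (mul_pos ha hδ)))
    (le_trans ?_ (aux_geom _ (mul_pos hb hδ)))
  · gcongr with m
    refine (min_le_left _ _).trans (Real.exp_le_exp.2 ?_)
    simp only [Equiv.subRight_apply]
    push_cast
    nlinarith
  · gcongr with m
    refine (min_le_right _ _).trans (Real.exp_le_exp.2 ?_)
    simp only [Equiv.subRight_apply]
    push_cast
    nlinarith

lemma aux_two_rpow (j s0 s1 θ : ℝ) :
    ((2 : ℝ) ^ (j * s0)) ^ (1 - θ) * ((2 : ℝ) ^ (j * s1)) ^ θ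
      = (2 : ℝ) ^ (j * ((1 - θ) * s0 + θ * s1)) := by
  rw [← Real.rpow_mul (by norm_num), ← Real.rpow_mul (by norm_num),
    ← Real.rpow_add (by norm_num)]
  ring_nf

lemma aux_meas (A B θ r : ℝ) : Measurable fun t : ℝ =>
    ENNReal.ofReal (t ^ (-θ) * min A (B * t)) ^ r / ENNReal.ofReal t := by
  fun_prop

lemma aux_lower (s0 s1 q p θ : ℝ) (hq : 0 < q) (hqp : q ≤ p) (h0 : 0 < θ) (h1 : θ < 1)
    (ξ : ℤ → ℝ) :
    (2 ^ (p + 1))⁻¹ * (ENNReal.ofReal (1 / p * (1 / θ + 1 / (1 - θ))) *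
      ∑' j : ℤ, (ENNReal.ofReal ((2 : ℝ) ^ ((j : ℝ) * ((1 - θ) * s0 + θ * s1)) * |ξ j|)) ^ p) ≤
    ∫⁻ t in Set.Ioi (0 : ℝ), (ENNReal.ofReal (t ^ (-θ)) *
      KfunE (lqsNorm s0 q) (lqsNorm s1 q) t ξ) ^ p / ENNReal.ofReal t := by
  have hp : 0 < p := by linarith
  have h1' : 0 < 1 - θ := by linarith
  have hc : ((2 : ℝ≥0∞) ^ (p + 1))⁻¹ ≠ ∞ := by simp
  have step : ∫⁻ t in Set.Ioi (0 : ℝ), (2 ^ (p + 1))⁻¹ * ∑' j : ℤ,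
      ENNReal.ofReal |ξ j| ^ p * (ENNReal.ofReal (t ^ (-θ) *
        min ((2 : ℝ) ^ ((j : ℝ) * s0)) ((2 : ℝ) ^ ((j : ℝ) * s1) * t)) ^ p / ENNReal.ofReal t) ≤
      ∫⁻ t in Set.Ioi (0 : ℝ), (ENNReal.ofReal (t ^ (-θ)) *
      KfunE (lqsNorm s0 q) (lqsNorm s1 q) t ξ) ^ p / ENNReal.ofReal t := by
    refine setLIntegral_mono' measurableSet_Ioi fun t ht => ?_
    have ht0 : 0 < t := ht
    have hk := aux_K_lower s0 s1 q p t hq hqp ht0 ξ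
    rw [ENNReal.mul_rpow_of_nonneg _ _ hp.le]
    calc _ = ENNReal.ofReal (t ^ (-θ)) ^ p * ((2 ^ (p + 1))⁻¹ * ∑' j : ℤ, ENNReal.ofReal
        (min ((2 : ℝ) ^ ((j : ℝ) * s0)) ((2 : ℝ) ^ ((j : ℝ) * s1) * t) * |ξ j|) ^ p)
          / ENNReal.ofReal t := by
          rw [mul_left_comm, mul_div_assoc]
          congr 1
          rw [← ENNReal.tsum_mul_left, div_eq_mul_inv, ← ENNReal.tsum_mul_right]
          refine tsum_congr fun j => ?_
          rw [ENNReal.ofReal_mul (by positivity), ENNReal.ofReal_mul (by positivity),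
            ENNReal.mul_rpow_of_nonneg _ _ hp.le, ENNReal.mul_rpow_of_nonneg _ _ hp.le,
            div_eq_mul_inv]
          ring
      _ ≤ _ := by gcongr
  refine le_trans (le_of_eq ?_) step
  rw [lintegral_const_mul' _ _ hc, lintegral_tsum
    (fun j => ((aux_meas _ _ _ _).const_mul _).aemeasurable), ← ENNReal.tsum_mul_left]
  congr 1
  refine tsum_congr fun j => ?_
  rw [lintegral_const_mul _ (aux_meas _ _ _ _),
    aux_integral _ _ _ _ (by positivity) (by positivity) h0 h1 hp, aux_two_rpow]
  generalize 1 / p * (1 / θ + 1 / (1 - θ)) = H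
  rw [ENNReal.ofReal_mul (by positivity), ENNReal.ofReal_mul (by positivity),
    ENNReal.mul_rpow_of_nonneg _ _ hp.le, ENNReal.ofReal_rpow_of_pos (p := p) (x := 2 ^ _) (by positivity)]
  ring

lemma aux_W (s0 s1 q θ : ℝ) (h01 : s0 < s1) (hq : 0 < q) (h0 : 0 < θ) (h1 : θ < 1)
    (t : ℝ) (ht : 0 < t) :
    ∑' j : ℤ, ENNReal.ofReal (t ^ (-θ) *
        min ((2 : ℝ) ^ ((j : ℝ) * s0) * (2 : ℝ) ^ (-((j : ℝ) * ((1 - θ) * s0 + θ * s1))))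
          ((2 : ℝ) ^ ((j : ℝ) * s1) * (2 : ℝ) ^ (-((j : ℝ) * ((1 - θ) * s0 + θ * s1))) * t)) ^ q
    ≤ ENNReal.ofReal ((1 + 1 / (q * ((s1 - s0) * Real.log 2))) * (1 / θ + 1 / (1 - θ))) := by
  have h1' : 0 < 1 - θ := by linarith
  have hl : 0 < Real.log 2 := Real.log_pos (by norm_num)
  have hs : 0 < s1 - s0 := by linarith
  have hδ : 0 < (s1 - s0) * Real.log 2 := by positivity
  have hS := aux_sum (θ * q) ((1 - θ) * q) ((s1 - s0) * Real.log 2) (Real.log t)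
    (by positivity) (by positivity) hδ
  refine le_trans (le_of_eq ?_) (hS.trans ?_)
  · refine tsum_congr fun j => ?_
    rw [ENNReal.ofReal_rpow_of_pos (by positivity)]
    congr 1
    rw [mul_min_of_nonneg _ _ (by positivity)]
    rw [(Real.monotoneOn_rpow_Ici_of_exponent_nonneg hq.le).map_min
      (Set.mem_Ici.2 (by positivity)) (Set.mem_Ici.2 (by positivity))]
    congr 1
    · rw [← Real.rpow_add (by norm_num), Real.rpow_def_of_pos ht,
        Real.rpow_def_of_pos (x := 2) (by norm_num), ← Real.exp_add, ← Real.exp_mul]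
      congr 1; ring
    · rw [← Real.rpow_add (by norm_num)]
      nth_rewrite 2 [← Real.exp_log ht]
      rw [Real.rpow_def_of_pos ht,
        Real.rpow_def_of_pos (x := 2) (by norm_num), ← Real.exp_add, ← Real.exp_add,
        ← Real.exp_mul]
      congr 1; ring
  · rw [← ENNReal.ofReal_add (by positivity) (by positivity)]
    apply ENNReal.ofReal_le_ofReal
    have a1 : 1 ≤ 1 / θ := (one_le_div h0).2 h1.le
    have a2 : 1 ≤ 1 / (1 - θ) := (one_le_div h1').2 (by linarith)
    have : (1 + 1 / (q * ((s1 - s0) * Real.log 2))) * (1 / θ + 1 / (1 - θ)) =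
      (1 / θ + 1 / (θ * q * ((s1 - s0) * Real.log 2))) +
        (1 / (1 - θ) + 1 / ((1 - θ) * q * ((s1 - s0) * Real.log 2))) := by
      field_simp
    rw [this]
    gcongr

lemma aux_upper (s0 s1 q p θ : ℝ) (h01 : s0 < s1) (hq : 0 < q) (hqp : q ≤ p) (h0 : 0 < θ)
    (h1 : θ < 1) (ξ : ℤ → ℝ) :
    ∫⁻ t in Set.Ioi (0 : ℝ), (ENNReal.ofReal (t ^ (-θ)) *
      KfunE (lqsNorm s0 q) (lqsNorm s1 q) t ξ) ^ p / ENNReal.ofReal t ≤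
    2 ^ p * (ENNReal.ofReal ((1 + 1 / (q * ((s1 - s0) * Real.log 2))) * (1 / θ + 1 / (1 - θ)))
        ^ (p / q - 1) * (ENNReal.ofReal (1 / q * (1 / θ + 1 / (1 - θ))) *
      ∑' j : ℤ, (ENNReal.ofReal
        ((2 : ℝ) ^ ((j : ℝ) * ((1 - θ) * s0 + θ * s1)) * |ξ j|)) ^ p)) := by
  have hp : 0 < p := by linarith
  have h1' : 0 < 1 - θ := by linarith
  have hr : 1 ≤ p / q := (one_le_div hq).2 hqp
  set M := ENNReal.ofReal ((1 + 1 / (q * ((s1 - s0) * Real.log 2))) * (1 / θ + 1 / (1 - θ)))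
    with hM
  set A : ℤ → ℝ := fun j => (2 : ℝ) ^ ((j : ℝ) * s0) *
    (2 : ℝ) ^ (-((j : ℝ) * ((1 - θ) * s0 + θ * s1))) with hA
  set B : ℤ → ℝ := fun j => (2 : ℝ) ^ ((j : ℝ) * s1) *
    (2 : ℝ) ^ (-((j : ℝ) * ((1 - θ) * s0 + θ * s1))) with hB
  set a : ℤ → ℝ≥0∞ := fun j => ENNReal.ofReal
        ((2 : ℝ) ^ ((j : ℝ) * ((1 - θ) * s0 + θ * s1)) * |ξ j|) with ha
  have hA0 : ∀ j, 0 < A j := fun j => by simp only [hA]; positivity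
  have hB0 : ∀ j, 0 < B j := fun j => by simp only [hB]; positivity
  have hAB : ∀ j, A j ^ (1 - θ) * B j ^ θ = 1 := by
    intro j
    simp only [hA, hB]
    rw [← Real.rpow_add (by norm_num), ← Real.rpow_add (by norm_num),
      ← Real.rpow_mul (by norm_num), ← Real.rpow_mul (by norm_num),
      ← Real.rpow_add (by norm_num)]
    ring_nf
    simp
  have hMt : M ^ (p / q - 1) ≠ ∞ := ENNReal.rpow_ne_top_of_nonneg (by linarith) (by simp [hM])
  have step : ∫⁻ t in Set.Ioi (0 : ℝ), (ENNReal.ofReal (t ^ (-θ)) *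
      KfunE (lqsNorm s0 q) (lqsNorm s1 q) t ξ) ^ p / ENNReal.ofReal t ≤
      ∫⁻ t in Set.Ioi (0 : ℝ), 2 ^ p * (M ^ (p / q - 1) * ∑' j : ℤ, a j ^ p *
        (ENNReal.ofReal (t ^ (-θ) * min (A j) (B j * t)) ^ q / ENNReal.ofReal t)) := by
    refine setLIntegral_mono' measurableSet_Ioi fun t ht => ?_
    have ht0 : 0 < t := ht
    have hk := aux_K_upper s0 s1 q t hq ht0 ξ
    have hW := aux_W s0 s1 q θ h01 hq h0 h1 t ht0
    have e1 : (ENNReal.ofReal (t ^ (-θ)) * (∑' j : ℤ, ENNReal.ofReal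
        (min ((2 : ℝ) ^ ((j : ℝ) * s0)) ((2 : ℝ) ^ ((j : ℝ) * s1) * t) * |ξ j|) ^ q) ^ (1 / q)) ^ p
        = (∑' j : ℤ, ENNReal.ofReal (t ^ (-θ) * min (A j) (B j * t)) ^ q * a j ^ q) ^ (p / q) := by
      have e : ENNReal.ofReal (t ^ (-θ)) = (ENNReal.ofReal (t ^ (-θ)) ^ q) ^ (1 / q) := by
        rw [← ENNReal.rpow_mul, mul_one_div_cancel hq.ne', ENNReal.rpow_one]
      rw [e, ← ENNReal.mul_rpow_of_nonneg _ _ (by positivity), ← ENNReal.tsum_mul_left,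
        ← ENNReal.rpow_mul, show 1 / q * p = p / q by ring]
      congr 1
      refine tsum_congr fun j => ?_
      rw [← ENNReal.mul_rpow_of_nonneg _ _ hq.le, ← ENNReal.mul_rpow_of_nonneg _ _ hq.le]
      congr 1
      have := hA0 j
      have := hB0 j
      simp only [ha]
      rw [← ENNReal.ofReal_mul (by positivity), ← ENNReal.ofReal_mul (by positivity)]
      congr 1
      have hm : min (A j) (B j * t) = min ((2 : ℝ) ^ ((j : ℝ) * s0))
          ((2 : ℝ) ^ ((j : ℝ) * s1) * t) *
            (2 : ℝ) ^ (-((j : ℝ) * ((1 - θ) * s0 + θ * s1))) := by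
        rw [min_mul_of_nonneg _ _ (by positivity)]
        simp only [hA, hB]
        congr 1
        ring
      rw [hm, Real.rpow_neg (x := 2) (by norm_num)]
      have : (2 : ℝ) ^ ((j : ℝ) * ((1 - θ) * s0 + θ * s1)) ≠ 0 := by positivity
      field_simp
    calc _ ≤ (ENNReal.ofReal (t ^ (-θ)) * (2 * (∑' j : ℤ, ENNReal.ofReal
        (min ((2 : ℝ) ^ ((j : ℝ) * s0)) ((2 : ℝ) ^ ((j : ℝ) * s1) * t) * |ξ j|) ^ q) ^ (1 / q))) ^ p
          / ENNReal.ofReal t := by gcongr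
      _ = 2 ^ p * (∑' j : ℤ, ENNReal.ofReal (t ^ (-θ) * min (A j) (B j * t)) ^ q * a j ^ q)
            ^ (p / q) / ENNReal.ofReal t := by
          rw [mul_left_comm, ENNReal.mul_rpow_of_nonneg _ _ hp.le, e1]
      _ ≤ 2 ^ p * (M ^ (p / q - 1) * ∑' j : ℤ,
            ENNReal.ofReal (t ^ (-θ) * min (A j) (B j * t)) ^ q * (a j ^ q) ^ (p / q))
            / ENNReal.ofReal t := by
          gcongr
          refine (aux_weight _ _ hr).trans ?_
          have : 0 ≤ p / q - 1 := by linarith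
          gcongr
      _ = _ := by
          rw [mul_div_assoc, mul_div_assoc]
          congr 2
          rw [div_eq_mul_inv, ← ENNReal.tsum_mul_right]
          refine tsum_congr fun j => ?_
          rw [← ENNReal.rpow_mul, mul_div_cancel₀ _ hq.ne', div_eq_mul_inv]
          ring
  refine step.trans (le_of_eq ?_)
  rw [lintegral_const_mul' _ _ (by simp), lintegral_const_mul' _ _ hMt, lintegral_tsum
    (fun j => ((aux_meas _ _ _ _).const_mul _).aemeasurable)]
  congr 2
  rw [← ENNReal.tsum_mul_left]
  refine tsum_congr fun j => ?_
  rw [lintegral_const_mul _ (aux_meas _ _ _ _),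
    aux_integral _ _ _ _ (hA0 j) (hB0 j) h0 h1 hq, hAB, Real.one_rpow, one_mul, mul_comm]

lemma aux_real (a b r : ℝ) (ha : 0 < a) (hb : 0 < b) (hr : 0 < r) :
    1 / 2 * (a ^ (-r) + b ^ (-r)) ≤ (1 / a + 1 / b) ^ r ∧
    (1 / a + 1 / b) ^ r ≤ 2 ^ r * (a ^ (-r) + b ^ (-r)) := by
  have e : ∀ x : ℝ, 0 < x → x ^ (-r) = (1 / x) ^ r := by
    intro x hx
    rw [Real.rpow_neg hx.le, one_div, Real.inv_rpow hx.le]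
  rw [e a ha, e b hb]
  have ha' : 0 < 1 / a := by positivity
  have hb' : 0 < 1 / b := by positivity
  generalize 1 / a = x at *
  generalize 1 / b = y at *
  constructor
  · have h1 : x ^ r ≤ (x + y) ^ r := by gcongr; linarith
    have h2 : y ^ r ≤ (x + y) ^ r := by gcongr; linarith
    linarith
  · rcases le_total x y with h | h
    · calc (x + y) ^ r ≤ (2 * y) ^ r := by gcongr; linarith
        _ = 2 ^ r * y ^ r := Real.mul_rpow (by norm_num) hb'.le
        _ ≤ _ := by gcongr; linarith [Real.rpow_pos_of_pos ha' r]
    · calc (x + y) ^ r ≤ (2 * x) ^ r := by gcongr; linarith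
        _ = 2 ^ r * x ^ r := Real.mul_rpow (by norm_num) ha'.le
        _ ≤ _ := by gcongr; linarith [Real.rpow_pos_of_pos hb' r]

/-- Let `s₀ < s₁`, `θ ∈ (0,1)`, `s = (1-θ)s₀+θs₁`, `p ≥ q > 0`. Then for all
sequences `ξ = (ξ_j)_{j∈ℤ}`:
`c (θ^{-1/p} + (1-θ)^{-1/p}) ‖ξ‖_{ℓ_p^s} ≤ ‖ξ‖_{(ℓ_q^{s₀}, ℓ_q^{s₁})_{θ,p}}
  ≤ C (θ^{-1/q} + (1-θ)^{-1/q}) ‖ξ‖_{ℓ_p^s}` with `c, C > 0` independent of `θ`. -/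
theorem stmt5 (s0 s1 q p : ℝ) (h01 : s0 < s1) (hq : 0 < q) (hqp : q ≤ p) :
    ∃ c C : ℝ, 0 < c ∧ 0 < C ∧
      ∀ θ ∈ Set.Ioo (0 : ℝ) 1, ∀ ξ : ℤ → ℝ,
        ENNReal.ofReal (c * (θ ^ (-(1 / p)) + (1 - θ) ^ (-(1 / p)))) *
            lqsNorm ((1 - θ) * s0 + θ * s1) p ξ ≤
          interpNormE (lqsNorm s0 q) (lqsNorm s1 q) θ p ξ ∧
        interpNormE (lqsNorm s0 q) (lqsNorm s1 q) θ p ξ ≤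
          ENNReal.ofReal (C * (θ ^ (-(1 / q)) + (1 - θ) ^ (-(1 / q)))) *
            lqsNorm ((1 - θ) * s0 + θ * s1) p ξ := by
  have hp : 0 < p := by linarith
  have hl : 0 < Real.log 2 := Real.log_pos (by norm_num)
  have hs : 0 < s1 - s0 := by linarith
  set D : ℝ := 1 + 1 / (q * ((s1 - s0) * Real.log 2)) + 1 / q with hD
  have hD0 : 0 < D := by positivity
  refine ⟨(((2 : ℝ) ^ (p + 1))⁻¹ * (1 / p)) ^ (1 / p) * (1 / 2),
    2 * (D ^ (1 / q) * 2 ^ (1 / q)), by positivity, by positivity, ?_⟩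
  rintro θ ⟨h0, h1⟩ ξ
  have h1' : 0 < 1 - θ := by linarith
  have hH : 0 < 1 / θ + 1 / (1 - θ) := by positivity
  constructor
  · have h := ENNReal.rpow_le_rpow (aux_lower s0 s1 q p θ hq hqp h0 h1 ξ)
      (by positivity : 0 ≤ 1 / p)
    unfold interpNormE
    refine le_trans ?_ h
    rw [← mul_assoc, ENNReal.mul_rpow_of_nonneg _ _ (by positivity)]
    unfold lqsNorm
    gcongr
    have e2 : ((2 : ℝ≥0∞) ^ (p + 1))⁻¹ = ENNReal.ofReal (((2 : ℝ) ^ (p + 1))⁻¹) := by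
      rw [ENNReal.ofReal_inv_of_pos (by positivity), ← ENNReal.ofReal_rpow_of_pos (by norm_num)]
      simp
    rw [e2, ← ENNReal.ofReal_mul (by positivity), ENNReal.ofReal_rpow_of_pos (by positivity)]
    apply ENNReal.ofReal_le_ofReal
    rw [← mul_assoc, Real.mul_rpow (by positivity) hH.le, mul_assoc]
    gcongr
    exact (aux_real θ (1 - θ) (1 / p) h0 h1' (by positivity)).1
  · have h := ENNReal.rpow_le_rpow (aux_upper s0 s1 q p θ h01 hq hqp h0 h1 ξ)
      (by positivity : 0 ≤ 1 / p)
    unfold interpNormE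
    refine h.trans ?_
    have hr : 1 ≤ p / q := (one_le_div hq).2 hqp
    set S := ∑' j : ℤ, (ENNReal.ofReal
        ((2 : ℝ) ^ ((j : ℝ) * ((1 - θ) * s0 + θ * s1)) * |ξ j|)) ^ p with hS
    set N := ENNReal.ofReal (D * (1 / θ + 1 / (1 - θ))) with hN
    have b1 : ENNReal.ofReal ((1 + 1 / (q * ((s1 - s0) * Real.log 2))) *
        (1 / θ + 1 / (1 - θ))) ≤ N := by
      apply ENNReal.ofReal_le_ofReal
      gcongr
      have : 0 < 1 / q := by positivity
      linarith
    have b2 : ENNReal.ofReal (1 / q * (1 / θ + 1 / (1 - θ))) ≤ N := by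
      apply ENNReal.ofReal_le_ofReal
      gcongr
      have : 0 < 1 / (q * ((s1 - s0) * Real.log 2)) := by positivity
      linarith
    have hr' : 0 ≤ p / q - 1 := by linarith
    calc _ ≤ (2 ^ p * (N ^ (p / q - 1) * (N * S))) ^ (1 / p) := by gcongr
      _ = (2 ^ p * (N ^ (p / q) * S)) ^ (1 / p) := by
        have : N ^ (p / q) = N ^ (p / q - 1) * N := by
          conv_lhs => rw [show p / q = (p / q - 1) + 1 by ring,
            ENNReal.rpow_add_of_nonneg _ _ hr' zero_le_one, ENNReal.rpow_one]
        rw [this, mul_assoc]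
      _ = 2 * N ^ (1 / q) * S ^ (1 / p) := by
        rw [ENNReal.mul_rpow_of_nonneg _ _ (by positivity),
          ENNReal.mul_rpow_of_nonneg _ _ (by positivity), ← ENNReal.rpow_mul, ← ENNReal.rpow_mul,
          mul_one_div_cancel hp.ne', ENNReal.rpow_one,
          show p / q * (1 / p) = 1 / q by field_simp, mul_assoc]
      _ ≤ _ := by
        unfold lqsNorm
        gcongr
        have e2 : (2 : ℝ≥0∞) = ENNReal.ofReal 2 := by simp
        rw [hN, ENNReal.ofReal_rpow_of_pos (by positivity), e2,
          ← ENNReal.ofReal_mul (by norm_num)]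
        apply ENNReal.ofReal_le_ofReal
        rw [Real.mul_rpow hD0.le hH.le, mul_assoc, mul_assoc]
        gcongr
        exact (aux_real θ (1 - θ) (1 / q) h0 h1' (by positivity)).2
end

section
/- Let (A₀, A₁) be a compatible pair, θ ∈ (0,1) and 0 < p ≤ q < ∞. Then (θ(1-θ)p)^{1/p} ‖f‖_{(A₀,A₁)_{θ,p}} ≥ c (θ(1-θ)q)^{1/q} ‖f‖_{(A₀,A₁)_{θ,q}} for all f, with c > 0 independent of θ, p, q. -/
open scoped ENNReal

open MeasureTheory Set

lemma aux_ftc (h : ℝ → ℝ) (θ p q κ : ℝ) (hp : 0 < p) (hq : 0 < q)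
    (hpos : ∀ x, 0 < x → 0 < h x) (hcont : ContinuousOn h (Ioi 0))
    (hder : ∀ x, 0 < x → ∃ d, HasDerivWithinAt h d (Ioi x) x ∧ -θ * (h x / x) ≤ d ∧
      d ≤ (1 - θ) * (h x / x))
    (hφ : ∀ x, 0 < x → 0 ≤ h x ^ p - κ * h x ^ q) (a b : ℝ) (ha : 0 < a) (hab : a ≤ b) :
    (h b ^ p / p - κ * (h b ^ q / q)) - (h a ^ p / p - κ * (h a ^ q / q)) ≤
      (1 - θ) * ∫ t in a..b, (h t ^ p - κ * h t ^ q) / t ∧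
    (h a ^ p / p - κ * (h a ^ q / q)) - (h b ^ p / p - κ * (h b ^ q / q)) ≤
      θ * ∫ t in a..b, (h t ^ p - κ * h t ^ q) / t := by
  choose! d hd hd1 hd2 using hder
  have hsub : Icc a b ⊆ Ioi 0 := fun x hx => lt_of_lt_of_le ha hx.1
  have hc : ContinuousOn h (Icc a b) := hcont.mono hsub
  have hne : ∀ x ∈ Icc a b, h x ≠ 0 := fun x hx => (hpos x (hsub hx)).ne'
  have hcr : ∀ r : ℝ, ContinuousOn (fun x => h x ^ r) (Icc a b) := fun r =>
    hc.rpow_const (fun x hx => Or.inl (hne x hx))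
  have hG : ContinuousOn (fun x => h x ^ p / p - κ * (h x ^ q / q)) (Icc a b) :=
    ((hcr p).div_const p).sub (continuousOn_const.mul ((hcr q).div_const q))
  have hF : ContinuousOn (fun t => (h t ^ p - κ * h t ^ q) / t) (Icc a b) :=
    ((hcr p).sub (continuousOn_const.mul (hcr q))).div continuousOn_id
      (fun x hx => (hsub hx).ne')
  have hD : ∀ x ∈ Ioo a b, HasDerivWithinAt (fun x => h x ^ p / p - κ * (h x ^ q / q))
      ((h x ^ p - κ * h x ^ q) / h x * d x) (Ioi x) x := by
    intro x hx
    have hx0 : 0 < x := ha.trans hx.1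
    have hh := hpos x hx0
    have h1 := ((hd x hx0).rpow_const (p := p) (Or.inl hh.ne')).div_const p
    have h2 := (((hd x hx0).rpow_const (p := q) (Or.inl hh.ne')).div_const q).const_mul κ
    refine (h1.sub h2).congr_deriv ?_
    rw [Real.rpow_sub_one hh.ne', Real.rpow_sub_one hh.ne']
    field_simp
  have key : ∀ x, 0 < x → 0 ≤ (h x ^ p - κ * h x ^ q) / h x := fun x hx =>
    div_nonneg (hφ x hx) (hpos x hx).le
  constructor
  · rw [← intervalIntegral.integral_const_mul]
    refine intervalIntegral.sub_le_integral_of_hasDeriv_right_of_le hab hG hD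
      ((hF.integrableOn_Icc).const_mul (1 - θ)) ?_
    intro x hx
    have hx0 : 0 < x := ha.trans hx.1
    have hh := hpos x hx0
    calc _ ≤ (h x ^ p - κ * h x ^ q) / h x * ((1 - θ) * (h x / x)) :=
          mul_le_mul_of_nonneg_left (hd2 x hx0) (key x hx0)
      _ = _ := by field_simp
  · have := intervalIntegral.integral_le_sub_of_hasDeriv_right_of_le hab hG hD
      ((hF.integrableOn_Icc).const_mul (-θ)) (fun x hx => by
        have hx0 : 0 < x := ha.trans hx.1
        have hh := hpos x hx0
        calc _ = (h x ^ p - κ * h x ^ q) / h x * (-θ * (h x / x)) := by field_simp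
          _ ≤ _ := mul_le_mul_of_nonneg_left (hd1 x hx0) (key x hx0))
    rw [intervalIntegral.integral_const_mul] at this
    linarith

lemma aux_bound (h : ℝ → ℝ) (θ p q κ : ℝ) (hp : 0 < p) (hq : 0 < q) (hκ : 0 ≤ κ)
    (hθ : 0 < θ) (hθ1 : θ < 1)
    (hpos : ∀ x, 0 < x → 0 < h x) (hcont : ContinuousOn h (Ioi 0))
    (hder : ∀ x, 0 < x → ∃ d, HasDerivWithinAt h d (Ioi x) x ∧ -θ * (h x / x) ≤ d ∧
      d ≤ (1 - θ) * (h x / x))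
    (hφ : ∀ x, 0 < x → 0 ≤ h x ^ p - κ * h x ^ q)
    (hint : IntegrableOn (fun t => h t ^ p / t) (Ioi 0))
    (hintφ : IntegrableOn (fun t => (h t ^ p - κ * h t ^ q) / t) (Ioi 0))
    (s : ℝ) (hs : 0 < s) :
    h s ^ p / p - κ * (h s ^ q / q) ≤
      θ * (1 - θ) * ∫ t in Ioi 0, (h t ^ p - κ * h t ^ q) / t := by
  have small1 : ∀ ε > 0, ∃ a, 0 < a ∧ a < s ∧ h a ^ p < ε := by
    intro ε hε
    by_contra! hcon
    have h1 : IntegrableOn (fun x : ℝ => x ^ (-1 : ℝ)) (Ioo 0 s) := by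
      have h2 : IntegrableOn (fun t => ε⁻¹ * (h t ^ p / t)) (Ioo 0 s) :=
        (hint.mono_set Ioo_subset_Ioi_self).const_mul _
      refine Integrable.mono' h2 (by fun_prop) ?_
      refine (ae_restrict_iff' measurableSet_Ioo).2 (Filter.Eventually.of_forall ?_)
      intro x hx
      have hx0 : 0 < x := hx.1
      rw [Real.rpow_neg_one, Real.norm_of_nonneg (inv_nonneg.2 hx0.le)]
      have := hcon x hx.1 hx.2
      calc x⁻¹ = ε⁻¹ * (ε / x) := by field_simp
        _ ≤ _ := by gcongr
    rw [intervalIntegral.integrableOn_Ioo_rpow_iff hs] at h1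
    exact lt_irrefl _ h1
  have small2 : ∀ ε > 0, ∃ b, s < b ∧ h b ^ p < ε := by
    intro ε hε
    by_contra! hcon
    have h1 : IntegrableOn (fun x : ℝ => x ^ (-1 : ℝ)) (Ioi s) := by
      have h2 : IntegrableOn (fun t => ε⁻¹ * (h t ^ p / t)) (Ioi s) :=
        (hint.mono_set (Ioi_subset_Ioi hs.le)).const_mul _
      refine Integrable.mono' h2 (by fun_prop) ?_
      refine (ae_restrict_iff' measurableSet_Ioi).2 (Filter.Eventually.of_forall ?_)
      intro x hx
      have hx0 : 0 < x := hs.trans hx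
      rw [Real.rpow_neg_one, Real.norm_of_nonneg (inv_nonneg.2 hx0.le)]
      have := hcon x hx
      calc x⁻¹ = ε⁻¹ * (ε / x) := by field_simp
        _ ≤ _ := by gcongr
    rw [integrableOn_Ioi_rpow_iff hs] at h1
    exact lt_irrefl _ h1
  set F := fun t => (h t ^ p - κ * h t ^ q) / t with hFdef
  have hF0 : ∀ t, 0 < t → 0 ≤ F t := fun t ht => div_nonneg (hφ t ht) ht.le
  have hi1 : IntegrableOn F (Ioc 0 s) := hintφ.mono_set Ioc_subset_Ioi_self
  have hi2 : IntegrableOn F (Ioi s) := hintφ.mono_set (Ioi_subset_Ioi hs.le)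
  have hsplit : ∫ t in Ioi 0, F t = (∫ t in Ioc 0 s, F t) + ∫ t in Ioi s, F t := by
    rw [← setIntegral_union Ioc_disjoint_Ioi_same measurableSet_Ioi hi1 hi2,
      Ioc_union_Ioi_eq_Ioi hs.le]
  refine le_of_forall_pos_le_add ?_
  intro ε hε
  obtain ⟨a, ha, has, hae⟩ := small1 (ε * p) (by positivity)
  obtain ⟨b, hsb, hbe⟩ := small2 (ε * p) (by positivity)
  have e1 := (aux_ftc h θ p q κ hp hq hpos hcont hder hφ a s ha has.le).1
  have e2 := (aux_ftc h θ p q κ hp hq hpos hcont hder hφ s b hs hsb.le).2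
  rw [intervalIntegral.integral_of_le has.le] at e1
  rw [intervalIntegral.integral_of_le hsb.le] at e2
  have m1 : ∫ t in Ioc a s, F t ≤ ∫ t in Ioc 0 s, F t :=
    setIntegral_mono_set hi1 ((ae_restrict_iff' measurableSet_Ioc).2
      (Filter.Eventually.of_forall fun x hx => hF0 x hx.1))
      (Ioc_subset_Ioc_left ha.le).eventuallyLE
  have m2 : ∫ t in Ioc s b, F t ≤ ∫ t in Ioi s, F t :=
    setIntegral_mono_set hi2 ((ae_restrict_iff' measurableSet_Ioi).2
      (Filter.Eventually.of_forall fun x hx => hF0 x (hs.trans hx)))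
      Ioc_subset_Ioi_self.eventuallyLE
  have z1 : h a ^ p / p - κ * (h a ^ q / q) ≤ ε := by
    have : 0 ≤ κ * (h a ^ q / q) := by have := hpos a ha; positivity
    have : h a ^ p / p ≤ ε := by rw [div_le_iff₀ hp]; exact hae.le
    linarith
  have z2 : h b ^ p / p - κ * (h b ^ q / q) ≤ ε := by
    have : 0 ≤ κ * (h b ^ q / q) := by have := hpos b (hs.trans hsb); positivity
    have : h b ^ p / p ≤ ε := by rw [div_le_iff₀ hp]; exact hbe.le
    linarith
  have m1' := mul_le_mul_of_nonneg_left m1 (sub_nonneg.2 hθ1.le)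
  have m2' := mul_le_mul_of_nonneg_left m2 hθ.le
  set Φ := h s ^ p / p - κ * (h s ^ q / q)
  set A := ∫ t in Ioc 0 s, F t
  set B := ∫ t in Ioi s, F t
  have f1 : Φ - ε ≤ (1 - θ) * A := by linarith
  have f2 : Φ - ε ≤ θ * B := by linarith
  have g1 := mul_le_mul_of_nonneg_left f1 hθ.le
  have g2 := mul_le_mul_of_nonneg_left f2 (sub_nonneg.2 hθ1.le)
  rw [hsplit]
  nlinarith

lemma aux_main (h : ℝ → ℝ) (θ p q : ℝ) (hp : 0 < p) (hpq : p ≤ q)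
    (hθ : 0 < θ) (hθ1 : θ < 1)
    (hpos : ∀ x, 0 < x → 0 < h x) (hcont : ContinuousOn h (Ioi 0))
    (hder : ∀ x, 0 < x → ∃ d, HasDerivWithinAt h d (Ioi x) x ∧ -θ * (h x / x) ≤ d ∧
      d ≤ (1 - θ) * (h x / x))
    (hint : IntegrableOn (fun t => h t ^ p / t) (Ioi 0)) :
    IntegrableOn (fun t => h t ^ q / t) (Ioi 0) ∧
    (θ * (1 - θ) * q) * (∫ t in Ioi 0, h t ^ q / t) ≤
      ((θ * (1 - θ) * p) * (∫ t in Ioi 0, h t ^ p / t)) ^ (q / p) := by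
  have hq : 0 < q := hp.trans_le hpq
  have hθ' : 0 < 1 - θ := by linarith
  have hJp : 0 ≤ ∫ t in Ioi 0, h t ^ p / t :=
    setIntegral_nonneg measurableSet_Ioi fun t ht =>
      div_nonneg (Real.rpow_nonneg (hpos t ht).le _) (le_of_lt ht)
  set J := ∫ t in Ioi 0, h t ^ p / t with hJ
  have b0 : ∀ s, 0 < s → h s ≤ (θ * (1 - θ) * p * J) ^ (1 / p) := by
    intro s hs
    have := aux_bound h θ p q 0 hp hq le_rfl hθ hθ1 hpos hcont hder
      (fun x hx => by have := hpos x hx; simp only [zero_mul, sub_zero]; positivity) hint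
      (by simpa using hint) s hs
    simp only [zero_mul, sub_zero] at this
    rw [div_le_iff₀ hp] at this
    rw [one_div, Real.le_rpow_inv_iff_of_pos (hpos s hs).le (by positivity) hp]
    linarith
  have hbdd : BddAbove (h '' Ioi 0) := ⟨_, by rintro _ ⟨s, hs, rfl⟩; exact b0 s hs⟩
  set S := sSup (h '' Ioi 0) with hSdef
  have hS : ∀ s, 0 < s → h s ≤ S := fun s hs => le_csSup hbdd ⟨s, hs, rfl⟩
  have hS0 : 0 < S := (hpos 1 one_pos).trans_le (hS 1 one_pos)
  have hle : ∀ x, 0 < x → S ^ (p - q) * h x ^ q ≤ h x ^ p := by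
    intro x hx
    have hh := hpos x hx
    have : S ^ (p - q) ≤ h x ^ (p - q) :=
      Real.rpow_le_rpow_of_nonpos hh (hS x hx) (by linarith)
    calc _ ≤ h x ^ (p - q) * h x ^ q := by gcongr
      _ = _ := by rw [← Real.rpow_add hh]; ring_nf
  have hκ : 0 < S ^ (p - q) := Real.rpow_pos_of_pos hS0 _
  have hiq : IntegrableOn (fun t => h t ^ q / t) (Ioi 0) := by
    refine Integrable.mono' (hint.const_mul (S ^ (p - q))⁻¹) ?_ ?_
    · refine ContinuousOn.aestronglyMeasurable ?_ measurableSet_Ioi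
      exact (hcont.rpow_const (fun x hx => Or.inl (hpos x hx).ne')).div continuousOn_id
        (fun x hx => ne_of_gt hx)
    · refine (ae_restrict_iff' measurableSet_Ioi).2 (Filter.Eventually.of_forall ?_)
      intro x hx
      have hx0 : 0 < x := hx
      have hh := hpos x hx
      rw [Real.norm_of_nonneg (by positivity)]
      have := hle x hx
      calc h x ^ q / x = (S ^ (p - q))⁻¹ * (S ^ (p - q) * h x ^ q / x) := by field_simp
        _ ≤ _ := by gcongr
  refine ⟨hiq, ?_⟩
  have hFeq : (fun t => (h t ^ p - S ^ (p - q) * h t ^ q) / t) =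
      fun t => h t ^ p / t - S ^ (p - q) * (h t ^ q / t) := by
    funext t; ring
  have hiφ : IntegrableOn (fun t => (h t ^ p - S ^ (p - q) * h t ^ q) / t) (Ioi 0) := by
    rw [hFeq]; exact hint.sub (hiq.const_mul _)
  have hval : ∫ t in Ioi 0, (h t ^ p - S ^ (p - q) * h t ^ q) / t =
      J - S ^ (p - q) * ∫ t in Ioi 0, h t ^ q / t := by
    rw [hFeq, integral_sub hint (hiq.const_mul _), integral_const_mul]
  set Q := ∫ t in Ioi 0, h t ^ q / t with hQ
  have hb := aux_bound h θ p q (S ^ (p - q)) hp hq hκ.le hθ hθ1 hpos hcont hder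
    (fun x hx => sub_nonneg.2 (hle x hx)) hint hiφ
  rw [hval] at hb
  have hSb : S ^ p / p - S ^ (p - q) * (S ^ q / q) ≤ θ * (1 - θ) * (J - S ^ (p - q) * Q) := by
    have hcl : IsClosed {x : ℝ | x ^ p / p - S ^ (p - q) * (x ^ q / q) ≤
        θ * (1 - θ) * (J - S ^ (p - q) * Q)} := by
      refine isClosed_le ?_ continuous_const
      exact ((Real.continuous_rpow_const hp.le).div_const p).sub
        (continuous_const.mul ((Real.continuous_rpow_const hq.le).div_const q))
    have hmem : S ∈ closure (h '' Ioi 0) := csSup_mem_closure ⟨h 1, 1, mem_Ioi.2 one_pos, rfl⟩ hbdd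
    refine hcl.closure_subset_iff.2 ?_ hmem
    rintro _ ⟨s, hs, rfl⟩
    exact hb s hs
  -- normalise
  have hSp : 0 < S ^ p := Real.rpow_pos_of_pos hS0 _
  have hSq : 0 < S ^ q := Real.rpow_pos_of_pos hS0 _
  have hspq : S ^ (p - q) = S ^ p / S ^ q := Real.rpow_sub hS0 _ _
  rw [hspq] at hSb
  set X := θ * (1 - θ) * p * J with hX
  have hX0 : 0 ≤ X := by positivity
  have hbern := one_add_mul_self_le_rpow_one_add (s := X / S ^ p - 1)
    (by have : 0 ≤ X / S ^ p := by positivity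
        linarith) (p := q / p) (by rw [le_div_iff₀ hp]; linarith)
  have e : 1 + (X / S ^ p - 1) = X / S ^ p := by ring
  rw [e, Real.div_rpow hX0 hSp.le, ← Real.rpow_mul hS0.le,
    mul_div_cancel₀ _ hp.ne', le_div_iff₀ hSq] at hbern
  refine le_trans ?_ hbern
  have h3 := mul_le_mul_of_nonneg_left hSb (by positivity : 0 ≤ q * (S ^ q / S ^ p))
  have e1 : q * (S ^ q / S ^ p) * (S ^ p / p - S ^ p / S ^ q * (S ^ q / q)) =
    q / p * S ^ q - S ^ q := by field_simp
  have e2 : q * (S ^ q / S ^ p) * (θ * (1 - θ) * (J - S ^ p / S ^ q * Q)) =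
    q / p * (X / S ^ p) * S ^ q - θ * (1 - θ) * q * Q := by
    rw [hX]; field_simp
  rw [e1, e2] at h3
  linarith

section K
variable {V : Type*} [AddCommGroup V] (N0 N1 : V → ℝ≥0∞) (f : V)

lemma K_mono {s t : ℝ} (hst : s ≤ t) : KfunE N0 N1 s f ≤ KfunE N0 N1 t f := by
  unfold KfunE
  gcongr

lemma K_quasi {s t : ℝ} (hs : 0 < s) (hst : s ≤ t) :
    ENNReal.ofReal (s / t) * KfunE N0 N1 t f ≤ KfunE N0 N1 s f := by
  have ht : 0 < t := hs.trans_le hst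
  refine le_iInf fun f0 => le_iInf fun f1 => le_iInf fun hf => ?_
  have h1 : KfunE N0 N1 t f ≤ N0 f0 + ENNReal.ofReal t * N1 f1 :=
    iInf_le_of_le f0 (iInf_le_of_le f1 (iInf_le_of_le hf le_rfl))
  calc _ ≤ ENNReal.ofReal (s / t) * (N0 f0 + ENNReal.ofReal t * N1 f1) := by gcongr
    _ = ENNReal.ofReal (s / t) * N0 f0 + ENNReal.ofReal s * N1 f1 := by
      rw [mul_add, ← mul_assoc, ← ENNReal.ofReal_mul (by positivity), div_mul_cancel₀ _ ht.ne']
    _ ≤ 1 * N0 f0 + ENNReal.ofReal s * N1 f1 := by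
      gcongr
      rw [ENNReal.ofReal_le_one, div_le_one ht]
      exact hst
    _ = _ := by rw [one_mul]

lemma K_conc {a b x y : ℝ} (ha : 0 ≤ a) (hb : 0 ≤ b) (hab : a + b = 1) (hx : 0 < x)
    (hy : 0 < y) : ENNReal.ofReal a * KfunE N0 N1 x f + ENNReal.ofReal b * KfunE N0 N1 y f ≤
      KfunE N0 N1 (a * x + b * y) f := by
  refine le_iInf fun f0 => le_iInf fun f1 => le_iInf fun hf => ?_
  have h1 : ∀ t, KfunE N0 N1 t f ≤ N0 f0 + ENNReal.ofReal t * N1 f1 := fun t =>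
    iInf_le_of_le f0 (iInf_le_of_le f1 (iInf_le_of_le hf le_rfl))
  have h2 : ENNReal.ofReal a + ENNReal.ofReal b = 1 := by
    rw [← ENNReal.ofReal_add ha hb, hab, ENNReal.ofReal_one]
  calc _ ≤ ENNReal.ofReal a * (N0 f0 + ENNReal.ofReal x * N1 f1) +
        ENNReal.ofReal b * (N0 f0 + ENNReal.ofReal y * N1 f1) := by
        gcongr
        · exact h1 x
        · exact h1 y
    _ = (ENNReal.ofReal a + ENNReal.ofReal b) * N0 f0 +
        (ENNReal.ofReal a * ENNReal.ofReal x + ENNReal.ofReal b * ENNReal.ofReal y) * N1 f1 := by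
        ring
    _ = _ := by
        rw [h2, one_mul, ENNReal.ofReal_add (by positivity) (by positivity),
          ENNReal.ofReal_mul ha, ENNReal.ofReal_mul hb]

end K

lemma h_props (k : ℝ → ℝ) (θ : ℝ) (kpos : ∀ x, 0 < x → 0 < k x)
    (kmono : ∀ x y, 0 < x → x ≤ y → k x ≤ k y)
    (kq : ∀ x y, 0 < x → x ≤ y → x / y * k y ≤ k x)
    (kc : ConcaveOn ℝ (Ioi 0) k) :
    ContinuousOn (fun t => t ^ (-θ) * k t) (Ioi 0) ∧
    ∀ x, 0 < x → ∃ d, HasDerivWithinAt (fun t => t ^ (-θ) * k t) d (Ioi x) x ∧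
      -θ * (x ^ (-θ) * k x / x) ≤ d ∧ d ≤ (1 - θ) * (x ^ (-θ) * k x / x) := by
  constructor
  · exact (continuousOn_id.rpow_const (fun x hx => Or.inl (ne_of_gt hx))).mul
      (kc.continuousOn isOpen_Ioi)
  · intro x hx
    have hd0 : DifferentiableWithinAt ℝ k (Ioi x) x := by
      have := kc.neg.differentiableWithinAt_Ioi_of_mem_interior (x := x)
        (by rw [interior_Ioi]; exact hx)
      simpa using this.neg
    have hd := hd0.hasDerivWithinAt
    set d := derivWithin k (Ioi x) x
    have htd := (hasDerivWithinAt_iff_tendsto_slope' self_notMem_Ioi).mp hd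
    have l1 : 0 ≤ d := by
      refine ge_of_tendsto htd ?_
      filter_upwards [self_mem_nhdsWithin] with y hy
      have hy' : x < y := hy
      rw [slope_def_field]
      exact div_nonneg (sub_nonneg.2 (kmono x y hx hy'.le)) (by linarith)
    have l2 : d ≤ k x / x := by
      refine le_of_tendsto htd ?_
      filter_upwards [self_mem_nhdsWithin] with y hy
      have hy' : x < y := hy
      have hy0 : 0 < y := hx.trans hy'
      rw [slope_def_field, div_le_div_iff₀ (by linarith) hx]
      have := kq x y hx hy'.le
      rw [div_mul_eq_mul_div, div_le_iff₀ hy0] at this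
      nlinarith
    have hr : HasDerivWithinAt (fun t : ℝ => t ^ (-θ)) (-θ * x ^ (-θ - 1)) (Ioi x) x :=
      (Real.hasDerivAt_rpow_const (Or.inl hx.ne')).hasDerivWithinAt
    refine ⟨_, hr.mul hd, ?_, ?_⟩
    · rw [Real.rpow_sub_one hx.ne']
      have : 0 ≤ x ^ (-θ) * d := mul_nonneg (Real.rpow_nonneg hx.le _) l1
      have e : -θ * (x ^ (-θ) * k x / x) = -θ * (x ^ (-θ) / x) * k x := by ring
      rw [e]; linarith
    · rw [Real.rpow_sub_one hx.ne']
      have : x ^ (-θ) * d ≤ x ^ (-θ) * (k x / x) :=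
        mul_le_mul_of_nonneg_left l2 (Real.rpow_nonneg hx.le _)
      have e : (1 - θ) * (x ^ (-θ) * k x / x) =
        -θ * (x ^ (-θ) / x) * k x + x ^ (-θ) * (k x / x) := by ring
      rw [e]; linarith

lemma stmt8_core {V : Type*} [AddCommGroup V] (N0 N1 : V → ℝ≥0∞)
    (p q θ : ℝ) (hp : 0 < p) (hpq : p ≤ q) (hθ : 0 < θ) (hθ1 : θ < 1) (f : V) :
    ENNReal.ofReal ((θ * (1 - θ) * q) ^ (1 / q)) * interpNormE N0 N1 θ q f ≤
          ENNReal.ofReal ((θ * (1 - θ) * p) ^ (1 / p)) * interpNormE N0 N1 θ p f := by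
  have hq : 0 < q := hp.trans_le hpq
  have hθ' : 0 < 1 - θ := by linarith
  by_cases hI : (∫⁻ t in Set.Ioi (0 : ℝ),
      (ENNReal.ofReal (t ^ (-θ)) * KfunE N0 N1 t f) ^ p / ENNReal.ofReal t) = ⊤
  · have : interpNormE N0 N1 θ p f = ⊤ := by
      unfold interpNormE
      rw [hI, ENNReal.top_rpow_of_pos (by positivity)]
    rw [this, ENNReal.mul_top]
    · exact le_top
    · rw [Ne, ENNReal.ofReal_eq_zero, not_le]; positivity
  have hfin0 : ∃ t, 0 < t ∧ KfunE N0 N1 t f ≠ ⊤ := by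
    by_contra! hcon
    apply hI
    rw [setLIntegral_congr_fun (g := fun _ => ⊤) measurableSet_Ioi]
    · simp
    · intro t ht
      have ht0 : (0 : ℝ) < t := ht
      have : ENNReal.ofReal (t ^ (-θ)) ≠ 0 := by
        rw [Ne, ENNReal.ofReal_eq_zero, not_le]; positivity
      simp only [hcon t ht, ENNReal.mul_top this, ENNReal.top_rpow_of_pos hp]
      exact ENNReal.top_div_of_ne_top ENNReal.ofReal_ne_top
  have hfin : ∀ s, 0 < s → KfunE N0 N1 s f ≠ ⊤ := by
    intro s hs htop
    obtain ⟨t, ht, hK⟩ := hfin0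
    rcases le_total s t with hst | hst
    · exact hK (top_le_iff.1 (htop ▸ K_mono N0 N1 f hst))
    · have := K_quasi N0 N1 f ht hst
      rw [htop, ENNReal.mul_top] at this
      · exact hK (top_le_iff.1 this)
      · rw [Ne, ENNReal.ofReal_eq_zero, not_le]; positivity
  by_cases hz : ∃ t, 0 < t ∧ KfunE N0 N1 t f = 0
  · obtain ⟨t, ht, hK⟩ := hz
    have hall : ∀ s, 0 < s → KfunE N0 N1 s f = 0 := by
      intro s hs
      rcases le_total s t with hst | hst
      · exact le_zero_iff.1 (hK ▸ K_mono N0 N1 f hst)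
      · have := K_quasi N0 N1 f ht hst
        rw [hK, nonpos_iff_eq_zero, mul_eq_zero] at this
        rcases this with h | h
        · rw [ENNReal.ofReal_eq_zero, ← not_lt] at h
          exact absurd (by positivity) h
        · exact h
    have : interpNormE N0 N1 θ q f = 0 := by
      unfold interpNormE
      rw [setLIntegral_congr_fun (g := fun _ => 0) measurableSet_Ioi]
      · simp [hq]
      · intro s hs
        simp [hall s hs, hq]
    rw [this, mul_zero]
    exact zero_le
  push Not at hz
  set k : ℝ → ℝ := fun t => (KfunE N0 N1 t f).toReal with hk
  have hkK : ∀ t, 0 < t → KfunE N0 N1 t f = ENNReal.ofReal (k t) := fun t ht =>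
    (ENNReal.ofReal_toReal (hfin t ht)).symm
  have kpos : ∀ x, 0 < x → 0 < k x := fun x hx => ENNReal.toReal_pos (hz x hx) (hfin x hx)
  have kmono : ∀ x y, 0 < x → x ≤ y → k x ≤ k y := fun x y hx hxy =>
    ENNReal.toReal_mono (hfin y (hx.trans_le hxy)) (K_mono N0 N1 f hxy)
  have kq : ∀ x y, 0 < x → x ≤ y → x / y * k y ≤ k x := by
    intro x y hx hxy
    have hy : 0 < y := hx.trans_le hxy
    have := K_quasi N0 N1 f hx hxy
    rw [hkK x hx, hkK y hy, ← ENNReal.ofReal_mul (by positivity),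
      ENNReal.ofReal_le_ofReal_iff (kpos x hx).le] at this
    exact this
  have kc : ConcaveOn ℝ (Ioi 0) k := by
    refine ⟨convex_Ioi 0, ?_⟩
    intro x hx y hy a b ha hb hab
    have hxy : 0 < a * x + b * y := (convex_Ioi (0 : ℝ)) hx hy ha hb hab
    have := K_conc N0 N1 f ha hb hab hx hy
    rw [hkK x hx, hkK y hy, hkK _ hxy, ← ENNReal.ofReal_mul ha, ← ENNReal.ofReal_mul hb,
      ← ENNReal.ofReal_add (mul_nonneg ha (kpos x hx).le) (mul_nonneg hb (kpos y hy).le),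
      ENNReal.ofReal_le_ofReal_iff (kpos _ hxy).le] at this
    simpa using this
  obtain ⟨hcont, hder⟩ := h_props k θ kpos kmono kq kc
  set h : ℝ → ℝ := fun t => t ^ (-θ) * k t with hh
  have hpos : ∀ x, 0 < x → 0 < h x := fun x hx => mul_pos (Real.rpow_pos_of_pos hx _) (kpos x hx)
  have hnn : ∀ r : ℝ, 0 ≤ᵐ[volume.restrict (Ioi 0)] fun t => h t ^ r / t := fun r =>
    (ae_restrict_iff' measurableSet_Ioi).2 (Filter.Eventually.of_forall fun x hx =>
      div_nonneg (Real.rpow_nonneg (hpos x hx).le _) (le_of_lt hx))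
  have hIeq : ∀ r : ℝ, 0 < r → (∫⁻ t in Set.Ioi (0 : ℝ),
      (ENNReal.ofReal (t ^ (-θ)) * KfunE N0 N1 t f) ^ r / ENNReal.ofReal t) =
      ∫⁻ t in Set.Ioi (0 : ℝ), ENNReal.ofReal (h t ^ r / t) := by
    intro r hr
    refine setLIntegral_congr_fun measurableSet_Ioi ?_
    intro t ht
    have ht0 : (0 : ℝ) < t := ht
    simp only
    rw [hkK t ht, ← ENNReal.ofReal_mul (by positivity),
      ENNReal.ofReal_rpow_of_nonneg (hpos t ht).le hr.le, ENNReal.ofReal_div_of_pos ht0]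
  have hint : IntegrableOn (fun t => h t ^ p / t) (Ioi 0) := by
    refine (lintegral_ofReal_ne_top_iff_integrable ?_ (hnn p)).1 ?_
    · refine ContinuousOn.aestronglyMeasurable ?_ measurableSet_Ioi
      exact (hcont.rpow_const (fun x hx => Or.inl (hpos x hx).ne')).div continuousOn_id
        (fun x hx => ne_of_gt hx)
    · rw [← hIeq p hp]; exact hI
  obtain ⟨hiq, hmain⟩ := aux_main h θ p q hp hpq hθ hθ1 hpos hcont hder hint
  have hJ0 : ∀ r : ℝ, 0 ≤ ∫ t in Ioi 0, h t ^ r / t := fun r => integral_nonneg_of_ae (hnn r)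
  have hN : ∀ r : ℝ, 0 < r → IntegrableOn (fun t => h t ^ r / t) (Ioi 0) →
      ENNReal.ofReal ((θ * (1 - θ) * r) ^ (1 / r)) * interpNormE N0 N1 θ r f =
      ENNReal.ofReal ((θ * (1 - θ) * r * ∫ t in Ioi 0, h t ^ r / t) ^ (1 / r)) := by
    intro r hr hi
    unfold interpNormE
    rw [hIeq r hr, ← ofReal_integral_eq_lintegral_ofReal hi (hnn r),
      ENNReal.ofReal_rpow_of_nonneg (hJ0 r) (by positivity), ← ENNReal.ofReal_mul (by positivity),
      Real.mul_rpow (by positivity) (hJ0 r)]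
  rw [hN p hp hint, hN q hq hiq]
  apply ENNReal.ofReal_le_ofReal
  have hJp := hJ0 p
  have hJq := hJ0 q
  calc _ ≤ ((θ * (1 - θ) * p * ∫ t in Ioi 0, h t ^ p / t) ^ (q / p)) ^ (1 / q) :=
        Real.rpow_le_rpow (by positivity) hmain (by positivity)
    _ = _ := by
        rw [← Real.rpow_mul (by positivity)]
        congr 1
        field_simp

/-- Monotonicity of normalized interpolation norms: for a compatible pair `(A₀, A₁)`,
`θ ∈ (0,1)` and `0 < p ≤ q < ∞`,
`(θ(1-θ)p)^{1/p} ‖f‖_{(A₀,A₁)_{θ,p}} ≥ c (θ(1-θ)q)^{1/q} ‖f‖_{(A₀,A₁)_{θ,q}}`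
with `c > 0` independent of `θ`, `p`, `q`. -/
theorem stmt8 {V : Type*} [AddCommGroup V] (N0 N1 : V → ℝ≥0∞)
    (hN00 : N0 0 = 0) (hN10 : N1 0 = 0) :
    ∃ c : ℝ, 0 < c ∧
      ∀ p q θ : ℝ, 0 < p → p ≤ q → 0 < θ → θ < 1 → ∀ f : V,
        ENNReal.ofReal c *
            (ENNReal.ofReal ((θ * (1 - θ) * q) ^ (1 / q)) * interpNormE N0 N1 θ q f) ≤
          ENNReal.ofReal ((θ * (1 - θ) * p) ^ (1 / p)) * interpNormE N0 N1 θ p f := by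
  refine ⟨1, one_pos, ?_⟩
  intro p q θ hp hpq hθ hθ1 f
  rw [ENNReal.ofReal_one, one_mul]
  exact stmt8_core N0 N1 p q θ hp hpq hθ hθ1 f
end
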